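/- Let (A(t))_{t∈ℕ} be a sequence of row-stochastic nonnegative n×n real matrices, and let (δ_t)_{t∈ℕ} be a sequence of positive reals with Σ_{t=0}^{∞} δ_t = +∞. If for every t the scrambling coefficient satisfies min_{i,j} Σ_{k=1}^{n} min{A(t)_{ik}, A(t)_{jk}} ≥ δ_t, then there exists a consensus matrix K (a row-stochastic matrix all of whose rows are equal) such that the backward product A(0,t) := A(t−1)···A(0) converges to K as t → ∞. -/

import Mathlib

open Matrix Filter Finset

/-- A confidence matrix is a row-stochastic matrix with nonnegative entries. -/
def RowStochastic {n : ℕ} (A : Matrix (Fin n) (Fin n) ℝ) : Prop :=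
  (∀ i j, 0 ≤ A i j) ∧ ∀ i, ∑ j, A i j = 1

/-- Backward accumulation `A(0,t) = A(t-1) ⋯ A(0)`. -/
def backProd {n : ℕ} (A : ℕ → Matrix (Fin n) (Fin n) ℝ) : ℕ → Matrix (Fin n) (Fin n) ℝ
  | 0 => 1
  | t + 1 => A t * backProd A t

/-!
The spread `max x - min x` of a vector measures its distance from consensus. Two rows `p`, `q` of a
stochastic matrix share the mass `∑ min (p k) (q k) ≥ δ`, and only the remaining mass `1 - δ` can
separate `p ⬝ᵥ x` from `q ⬝ᵥ x`, so that multiplication by the matrix shrinks the spread by a factor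
`1 - δ ≤ exp (-δ)`. As `∑ δ t = ∞`, the spread of `x (t + 1) = A t *ᵥ x t` tends to `0`, while
`max (x t)` decreases and `min (x t)` increases, being averaged at each step; hence all coordinates
converge to a common value. Apply this to each column of the backward products.
-/

open scoped Topology

section Contraction

variable {R ι : Type*} [Fintype ι]

section Semiring

variable [Semiring R] [PartialOrder R] [IsOrderedRing R]

theorem dotProduct_le_sum_mul {w x : ι → R} {b : R} (hw : ∀ k, 0 ≤ w k) (hx : ∀ k, x k ≤ b) :
    w ⬝ᵥ x ≤ (∑ k, w k) * b := by
  rw [sum_mul]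
  exact dotProduct_le_dotProduct_of_nonneg_left hx hw

theorem sum_mul_le_dotProduct {w x : ι → R} {a : R} (hw : ∀ k, 0 ≤ w k) (hx : ∀ k, a ≤ x k) :
    (∑ k, w k) * a ≤ w ⬝ᵥ x := by
  rw [sum_mul]
  exact dotProduct_le_dotProduct_of_nonneg_left hx hw

theorem mulVec_apply_le_of_mem_rowStochastic [DecidableEq ι] {A : Matrix ι ι R}
    (hA : A ∈ rowStochastic R ι) {x : ι → R} {b : R} (hx : ∀ k, x k ≤ b) (i : ι) :
    (A *ᵥ x) i ≤ b := by
  simpa only [sum_row_of_mem_rowStochastic hA, one_mul, mulVec]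
    using dotProduct_le_sum_mul (hA.1 i) hx

theorem le_mulVec_apply_of_mem_rowStochastic [DecidableEq ι] {A : Matrix ι ι R}
    (hA : A ∈ rowStochastic R ι) {x : ι → R} {a : R} (hx : ∀ k, a ≤ x k) (i : ι) :
    a ≤ (A *ᵥ x) i := by
  simpa only [sum_row_of_mem_rowStochastic hA, one_mul, mulVec]
    using sum_mul_le_dotProduct (hA.1 i) hx

end Semiring

theorem dotProduct_sub_dotProduct_le [Ring R] [LinearOrder R] [IsOrderedRing R]
    {p q x : ι → R} {a b : R} (hpq : ∑ k, p k = ∑ k, q k) (hx : ∀ k, x k ∈ Set.Icc a b) :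
    p ⬝ᵥ x - q ⬝ᵥ x ≤ (∑ k, p k - ∑ k, min (p k) (q k)) * (b - a) := by
  set w : ι → R := fun k ↦ min (p k) (q k)
  have upper : (p - w) ⬝ᵥ x ≤ (∑ k, p k - ∑ k, w k) * b := by
    rw [← sum_sub_distrib]
    exact dotProduct_le_sum_mul (fun k ↦ sub_nonneg.2 (min_le_left _ _)) fun k ↦ (hx k).2
  have lower : (∑ k, p k - ∑ k, w k) * a ≤ (q - w) ⬝ᵥ x := by
    rw [hpq, ← sum_sub_distrib]
    exact sum_mul_le_dotProduct (fun k ↦ sub_nonneg.2 (min_le_right _ _)) fun k ↦ (hx k).1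
  calc
    p ⬝ᵥ x - q ⬝ᵥ x = (p - w) ⬝ᵥ x - (q - w) ⬝ᵥ x := by
      rw [sub_dotProduct, sub_dotProduct, sub_sub_sub_cancel_right]
    _ ≤ (∑ k, p k - ∑ k, w k) * b - (∑ k, p k - ∑ k, w k) * a := sub_le_sub upper lower
    _ = (∑ k, p k - ∑ k, w k) * (b - a) := (mul_sub _ _ _).symm

end Contraction

section Spread

variable {ι : Type*}

/-- The spread `max x - min x` of a real vector, which measures its distance from consensus. It is
meant for finite nonempty `ι`, where the supremum and infimum are attained. -/
noncomputable def spread (x : ι → ℝ) : ℝ :=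
  (⨆ i, x i) - ⨅ i, x i

theorem spread_nonneg [Finite ι] [Nonempty ι] (x : ι → ℝ) : 0 ≤ spread x :=
  sub_nonneg.2 (ciInf_le_ciSup (Finite.bddBelow_range x) (Finite.bddAbove_range x))

theorem spread_le [Finite ι] [Nonempty ι] {x : ι → ℝ} {d : ℝ} (h : ∀ i j, x i - x j ≤ d) :
    spread x ≤ d := by
  obtain ⟨i, hi⟩ := exists_eq_ciSup_of_finite (f := x)
  obtain ⟨j, hj⟩ := exists_eq_ciInf_of_finite (f := x)
  simpa only [spread, ← hi, ← hj] using h i j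

theorem spread_mulVec_le [Fintype ι] [DecidableEq ι] [Nonempty ι] {A : Matrix ι ι ℝ} {δ : ℝ}
    (hA : A ∈ rowStochastic ℝ ι) (hscr : ∀ i j, δ ≤ ∑ k, min (A i k) (A j k)) (x : ι → ℝ) :
    spread (A *ᵥ x) ≤ (1 - δ) * spread x := by
  refine spread_le fun i j ↦ ?_
  have hrow := sum_row_of_mem_rowStochastic hA
  calc
    (A *ᵥ x) i - (A *ᵥ x) j ≤ (∑ k, A i k - ∑ k, min (A i k) (A j k)) * spread x :=
      dotProduct_sub_dotProduct_le ((hrow i).trans (hrow j).symm)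
        fun k ↦ ⟨Finite.ciInf_le x k, Finite.le_ciSup x k⟩
    _ ≤ (1 - δ) * spread x := by
      rw [hrow]
      exact mul_le_mul_of_nonneg_right (sub_le_sub_left (hscr i j) 1) (spread_nonneg x)

theorem exists_tendsto_const_of_tendsto_spread [Finite ι] [Nonempty ι] {x : ℕ → ι → ℝ}
    (hsup : Antitone fun t ↦ ⨆ i, x t i) (hinf : Monotone fun t ↦ ⨅ i, x t i)
    (hspread : Tendsto (fun t ↦ spread (x t)) atTop (𝓝 0)) :
    ∃ c, Tendsto x atTop (𝓝 fun _ ↦ c) := by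
  have hbdd : BddBelow (Set.range fun t ↦ ⨆ i, x t i) := by
    refine ⟨⨅ i, x 0 i, Set.forall_mem_range.2 fun t ↦ ?_⟩
    exact (hinf t.zero_le).trans (sub_nonneg.1 (spread_nonneg (x t)))
  have tendsto_sup := tendsto_atTop_ciInf hsup hbdd
  have tendsto_inf := tendsto_sup.sub hspread
  simp only [spread, sub_sub_cancel, sub_zero] at tendsto_inf
  refine ⟨⨅ t, ⨆ i, x t i, tendsto_pi_nhds.2 fun i ↦ ?_⟩
  exact tendsto_of_tendsto_of_tendsto_of_le_of_le tendsto_inf tendsto_sup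
    (fun t ↦ Finite.ciInf_le (x t) i) fun t ↦ Finite.le_ciSup (x t) i

end Spread

section Convergence

theorem tendsto_zero_of_succ_le_one_sub_mul {a δ : ℕ → ℝ} (ha : ∀ t, 0 ≤ a t)
    (hδ : Tendsto (fun T ↦ ∑ t ∈ range T, δ t) atTop atTop)
    (hstep : ∀ t, a (t + 1) ≤ (1 - δ t) * a t) : Tendsto a atTop (𝓝 0) := by
  have bound (t : ℕ) : a t ≤ Real.exp (-∑ s ∈ range t, δ s) * a 0 := by
    induction t with
    | zero => simp
    | succ t ih =>
      calc
        a (t + 1) ≤ (1 - δ t) * a t := hstep t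
        _ ≤ Real.exp (-δ t) * a t :=
          mul_le_mul_of_nonneg_right (Real.one_sub_le_exp_neg _) (ha t)
        _ ≤ Real.exp (-δ t) * (Real.exp (-∑ s ∈ range t, δ s) * a 0) :=
          mul_le_mul_of_nonneg_left ih (Real.exp_nonneg _)
        _ = Real.exp (-∑ s ∈ range (t + 1), δ s) * a 0 := by
          rw [← mul_assoc, ← Real.exp_add, sum_range_succ, neg_add_rev]
  have decay := (Real.tendsto_exp_neg_atTop_nhds_zero.comp hδ).mul_const (a 0)
  rw [zero_mul] at decay
  exact squeeze_zero ha bound decay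

theorem isClosed_rowStochastic {R ι : Type*} [Fintype ι] [DecidableEq ι] [Semiring R]
    [PartialOrder R] [IsOrderedRing R] [TopologicalSpace R] [OrderClosedTopology R]
    [ContinuousAdd R] : IsClosed (rowStochastic R ι : Set (Matrix ι ι R)) := by
  have entry (i j : ι) : Continuous fun M : Matrix ι ι R ↦ M i j := continuous_id.matrix_elem i j
  have nonneg : IsClosed {M : Matrix ι ι R | ∀ i j, 0 ≤ M i j} := by
    simp only [Set.ofPred_forall]
    exact isClosed_iInter fun i ↦ isClosed_iInter fun j ↦ isClosed_le continuous_const (entry i j)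
  have row_sum : IsClosed {M : Matrix ι ι R | ∀ i, ∑ j, M i j = 1} := by
    simp only [Set.ofPred_forall]
    exact isClosed_iInter fun i ↦
      isClosed_eq (continuous_finsetSum _ fun j _ ↦ entry i j) continuous_const
  convert nonneg.inter row_sum using 1
  exact Set.ext fun _ ↦ mem_rowStochastic_iff_sum

variable {ι : Type*} [Fintype ι] [DecidableEq ι] {A : ℕ → Matrix ι ι ℝ} {δ : ℕ → ℝ}

theorem exists_tendsto_const_of_scrambling {x : ℕ → ι → ℝ} (hA : ∀ t, A t ∈ rowStochastic ℝ ι)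
    (hδ : Tendsto (fun T ↦ ∑ t ∈ range T, δ t) atTop atTop)
    (hscr : ∀ t i j, δ t ≤ ∑ k, min (A t i k) (A t j k))
    (hx : ∀ t, x (t + 1) = A t *ᵥ x t) : ∃ c, Tendsto x atTop (𝓝 fun _ ↦ c) := by
  rcases isEmpty_or_nonempty ι with _ | _
  · exact ⟨0, tendsto_const_nhds.congr fun _ ↦ Subsingleton.elim _ _⟩
  apply exists_tendsto_const_of_tendsto_spread
  · refine antitone_nat_of_succ_le fun t ↦ ciSup_le fun i ↦ ?_
    rw [hx]
    exact mulVec_apply_le_of_mem_rowStochastic (hA t) (Finite.le_ciSup (x t)) i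
  · refine monotone_nat_of_le_succ fun t ↦ le_ciInf fun i ↦ ?_
    rw [hx]
    exact le_mulVec_apply_of_mem_rowStochastic (hA t) (Finite.ciInf_le (x t)) i
  · refine tendsto_zero_of_succ_le_one_sub_mul (fun t ↦ spread_nonneg (x t)) hδ fun t ↦ ?_
    rw [hx]
    exact spread_mulVec_le (hA t) (hscr t) (x t)

theorem scrambling_consensus_general {P : ℕ → Matrix ι ι ℝ} (hA : ∀ t, A t ∈ rowStochastic ℝ ι)
    (hδ : Tendsto (fun T ↦ ∑ t ∈ range T, δ t) atTop atTop)
    (hscr : ∀ t i j, δ t ≤ ∑ k, min (A t i k) (A t j k))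
    (hP₀ : P 0 ∈ rowStochastic ℝ ι) (hP : ∀ t, P (t + 1) = A t * P t) :
    ∃ K ∈ rowStochastic ℝ ι, (∀ i j, K i = K j) ∧ Tendsto P atTop (𝓝 K) := by
  have column (j : ι) : ∃ c, Tendsto (fun t ↦ (P t).col j) atTop (𝓝 fun _ ↦ c) :=
    exists_tendsto_const_of_scrambling hA hδ hscr fun t ↦ by rw [hP]; rfl
  choose c hc using column
  have hlim : Tendsto P atTop (𝓝 (of fun _ ↦ c)) :=
    tendsto_pi_nhds.2 fun i ↦ tendsto_pi_nhds.2 fun j ↦ tendsto_pi_nhds.1 (hc j) i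
  have hstoch (t : ℕ) : P t ∈ rowStochastic ℝ ι := by
    induction t with
    | zero => exact hP₀
    | succ t ih => exact hP t ▸ mul_mem (hA t) ih
  exact ⟨_, isClosed_rowStochastic.mem_of_tendsto hlim (.of_forall hstoch), fun _ _ ↦ rfl, hlim⟩

end Convergence

theorem rowStochastic_iff_mem_rowStochastic {n : ℕ} {A : Matrix (Fin n) (Fin n) ℝ} :
    RowStochastic A ↔ A ∈ rowStochastic ℝ (Fin n) :=
  mem_rowStochastic_iff_sum.symm

/-- **Proposition 3.** If the scrambling coefficients of a sequence of row-stochastic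
matrices are bounded below by positive reals `δ_t` with divergent sum, then the backward
products converge to a consensus matrix. -/
theorem scrambling_consensus
    (n : ℕ) (A : ℕ → Matrix (Fin n) (Fin n) ℝ) (δ : ℕ → ℝ)
    (hstoch : ∀ t, RowStochastic (A t))
    (hδpos : ∀ t, 0 < δ t)
    (hδdiv : Tendsto (fun T => ∑ t ∈ Finset.range T, δ t) atTop atTop)
    (hscr : ∀ t (i j : Fin n), δ t ≤ ∑ k, min (A t i k) (A t j k)) :
    ∃ K : Matrix (Fin n) (Fin n) ℝ,
      RowStochastic K ∧ (∀ i j : Fin n, K i = K j) ∧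
      Tendsto (fun t => backProd A t) atTop (nhds K) := by
  simp only [rowStochastic_iff_mem_rowStochastic] at hstoch ⊢
  exact scrambling_consensus_general hstoch hδdiv hscr (one_mem _) fun _ ↦ rfl
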